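/- arXiv:2508.12624 — 3 statements merged into one kernel-verified Lean document; each statement's English description precedes it below -/
import Mathlib

section
/- Let Λ = U ⊕ Λ' be a symplectic lattice with U spanned by e, f satisfying (e, f) = 1. Let v, w ∈ Λ' be vectors that are primitive in Λ with [v*] = [w*] in D_Λ, and set d = div(v). Then there exist γ ∈ Γ_Λ and α ∈ ℤ such that γ(v + de) = w + de + dα f. -/
noncomputable section

open Submodule

variable {V : Type} [AddCommGroup V] [Module ℚ V]

/-- The dual lattice `Λ^∨ = {v ∈ Λ⊗ℚ : (v, Λ) ⊆ ℤ}` of a lattice `L` (inside the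
ambient rational vector space `V = Λ⊗ℚ`) with respect to the form `B`. -/
def dualLattice (B : V →ₗ[ℚ] V →ₗ[ℚ] ℚ) (L : Submodule ℤ V) : Submodule ℤ V where
  carrier := {v : V | ∀ x ∈ L, ∃ n : ℤ, B v x = (n : ℚ)}
  zero_mem' := fun x _ => ⟨0, by simp⟩
  add_mem' := by
    intro a b ha hb x hx
    obtain ⟨n, hn⟩ := ha x hx
    obtain ⟨m, hm⟩ := hb x hx
    exact ⟨n + m, by rw [map_add, LinearMap.add_apply, hn, hm]; push_cast; ring⟩
  smul_mem' := by
    intro c a ha x hx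
    obtain ⟨n, hn⟩ := ha x hx
    refine ⟨c * n, ?_⟩
    have h1 : B (c • a) x = (B.flip x) (c • a) := rfl
    rw [h1, map_zsmul, LinearMap.flip_apply, hn, zsmul_eq_mul]
    push_cast; ring

/-- A vector `v` is primitive in the lattice `L` if `ℚv ∩ L = ℤv`. -/
def IsPrimitive (L : Submodule ℤ V) (v : V) : Prop :=
  v ∈ L ∧ (Submodule.span ℚ {v}).restrictScalars ℤ ⊓ L = Submodule.span ℤ {v}

/-- `div(v) = d`, i.e. the ideal `(v, L) ⊆ ℤ` is generated by the positive integer `d`. -/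
def HasDiv (B : V →ₗ[ℚ] V →ₗ[ℚ] ℚ) (L : Submodule ℤ V) (v : V) (d : ℕ) : Prop :=
  0 < d ∧ (∀ x ∈ L, ∃ n : ℤ, B v x = (n : ℚ) * (d : ℚ)) ∧ (∃ x ∈ L, B v x = (d : ℚ))

/-- `v* = v / div(v)`. -/
def vstar (v : V) (d : ℕ) : V := ((d : ℚ))⁻¹ • v

lemma vstar_mem {B : V →ₗ[ℚ] V →ₗ[ℚ] ℚ} {L : Submodule ℤ V} {v : V} {d : ℕ}
    (h : HasDiv B L v d) : vstar v d ∈ dualLattice B L := by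
  intro x hx
  obtain ⟨n, hn⟩ := h.2.1 x hx
  refine ⟨n, ?_⟩
  have hd : (d : ℚ) ≠ 0 := Nat.cast_ne_zero.mpr h.1.ne'
  show B (((d : ℚ))⁻¹ • v) x = (n : ℚ)
  rw [map_smul, LinearMap.smul_apply, hn, smul_eq_mul]
  field_simp

/-- The discriminant group `D_Λ = Λ^∨ / Λ`. -/
abbrev DiscGroup (B : V →ₗ[ℚ] V →ₗ[ℚ] ℚ) (L : Submodule ℤ V) :=
  dualLattice B L ⧸ (L.comap (dualLattice B L).subtype)

/-- The class of an element of the dual lattice in the discriminant group. -/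
def discCls (B : V →ₗ[ℚ] V →ₗ[ℚ] ℚ) (L : Submodule ℤ V) (v : dualLattice B L) :
    DiscGroup B L := Submodule.Quotient.mk v

/-- `γ` is an isometry of the lattice `L`, i.e. an element of `Sp(Λ)` (viewed as a
rational linear automorphism of the ambient space preserving `L` and the form). -/
def IsIsometry (B : V →ₗ[ℚ] V →ₗ[ℚ] ℚ) (L : Submodule ℤ V) (γ : V ≃ₗ[ℚ] V) : Prop :=
  (∀ v, v ∈ L ↔ γ v ∈ L) ∧ ∀ v w, B (γ v) (γ w) = B v w

/-- `γ` lies in `Γ_Λ`: it is an isometry of `L` acting trivially on the discriminant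
group, i.e. `γ(v) ≡ v mod Λ` for every `v ∈ Λ^∨`. -/
def InGamma (B : V →ₗ[ℚ] V →ₗ[ℚ] ℚ) (L : Submodule ℤ V) (γ : V ≃ₗ[ℚ] V) : Prop :=
  IsIsometry B L γ ∧ ∀ v ∈ dualLattice B L, γ v - v ∈ L

lemma isometry_dual_mem {B : V →ₗ[ℚ] V →ₗ[ℚ] ℚ} {L : Submodule ℤ V} {γ : V ≃ₗ[ℚ] V}
    (h : IsIsometry B L γ) {u : V} (hu : u ∈ dualLattice B L) :
    γ u ∈ dualLattice B L := by
  intro x hx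
  have hx' : γ.symm x ∈ L := by
    rw [h.1 (γ.symm x), LinearEquiv.apply_symm_apply]
    exact hx
  obtain ⟨n, hn⟩ := hu (γ.symm x) hx'
  refine ⟨n, ?_⟩
  have := h.2 u (γ.symm x)
  rw [LinearEquiv.apply_symm_apply] at this
  rw [this, hn]

/-- The transvection `T_{l,m} : v ↦ v + (l,v)m + (m,v)l` on the rational vector space. -/
def transvection (B : V →ₗ[ℚ] V →ₗ[ℚ] ℚ) (l m : V) : V →ₗ[ℚ] V :=
  LinearMap.id + (B l).smulRight m + (B m).smulRight l

/-- An orthogonal decomposition `Λ = U ⊕ Λ'` with `U` a hyperbolic plane spanned by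
`e, f` with `(e,f) = 1`. -/
def OrthoDecompU (B : V →ₗ[ℚ] V →ₗ[ℚ] ℚ) (L : Submodule ℤ V)
    (e f : V) (L' : Submodule ℤ V) : Prop :=
  e ∈ L ∧ f ∈ L ∧ L' ≤ L ∧ B e f = 1 ∧
  (∀ z ∈ L', B e z = 0 ∧ B f z = 0) ∧
  Submodule.span ℤ {e, f} ⊔ L' = L

/-- An orthogonal decomposition `Λ = U₁ ⊕ U₂ ⊕ Λ''` with `U₁, U₂` hyperbolic planes. -/
def OrthoDecompUU (B : V →ₗ[ℚ] V →ₗ[ℚ] ℚ) (L : Submodule ℤ V)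
    (e₁ f₁ e₂ f₂ : V) (L'' : Submodule ℤ V) : Prop :=
  e₁ ∈ L ∧ f₁ ∈ L ∧ e₂ ∈ L ∧ f₂ ∈ L ∧ L'' ≤ L ∧
  B e₁ f₁ = 1 ∧ B e₂ f₂ = 1 ∧
  B e₁ e₂ = 0 ∧ B e₁ f₂ = 0 ∧ B f₁ e₂ = 0 ∧ B f₁ f₂ = 0 ∧
  (∀ z ∈ L'', B e₁ z = 0 ∧ B f₁ z = 0 ∧ B e₂ z = 0 ∧ B f₂ z = 0) ∧
  Submodule.span ℤ {e₁, f₁} ⊔ Submodule.span ℤ {e₂, f₂} ⊔ L'' = L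

/-- An orthogonal decomposition `Λ = U ⊕ U(p) ⊕ ⋯ ⊕ U(p)`. -/
def OrthoDecompUUp (B : V →ₗ[ℚ] V →ₗ[ℚ] ℚ) (L : Submodule ℤ V) (p : ℕ)
    (e f : V) {ι : Type} (E F : ι → V) : Prop :=
  e ∈ L ∧ f ∈ L ∧ (∀ i, E i ∈ L) ∧ (∀ i, F i ∈ L) ∧
  B e f = 1 ∧ (∀ i, B (E i) (F i) = (p : ℚ)) ∧
  (∀ i, B e (E i) = 0 ∧ B e (F i) = 0 ∧ B f (E i) = 0 ∧ B f (F i) = 0) ∧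
  (∀ i j, i ≠ j → B (E i) (E j) = 0 ∧ B (E i) (F j) = 0 ∧ B (F i) (F j) = 0) ∧
  Submodule.span ℤ ({e, f} ∪ Set.range E ∪ Set.range F) = L

/-- An orthogonal decomposition `Λ = U(d₁) ⊕ ⋯ ⊕ U(d_g)`. -/
def OrthoDecompType (B : V →ₗ[ℚ] V →ₗ[ℚ] ℚ) (L : Submodule ℤ V) {g : ℕ}
    (d : Fin g → ℕ) (E F : Fin g → V) : Prop :=
  (∀ i, E i ∈ L) ∧ (∀ i, F i ∈ L) ∧
  (∀ i, B (E i) (F i) = (d i : ℚ)) ∧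
  (∀ i j, i ≠ j → B (E i) (E j) = 0 ∧ B (E i) (F j) = 0 ∧ B (F i) (F j) = 0) ∧
  Submodule.span ℤ (Set.range E ∪ Set.range F) = L

lemma coe_int_addCircle (n : ℤ) : (((n : ℚ) : AddCircle (1 : ℚ))) = 0 := by
  have hmem : ((n : ℚ)) ∈ AddSubgroup.zmultiples (1 : ℚ) := ⟨n, by simp⟩
  exact (QuotientAddGroup.eq_zero_iff _).mpr hmem

lemma bilin_antisymm (B : V →ₗ[ℚ] V →ₗ[ℚ] ℚ) (halt : ∀ v, B v v = 0) (a b : V) :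
    B a b = - B b a := by
  have h := halt (a + b)
  simp only [map_add, LinearMap.add_apply] at h
  rw [halt a, halt b] at h
  linarith

/-- The `ℚ/ℤ`-valued pairing on the dual lattice. -/
def rationalPairing (B : V →ₗ[ℚ] V →ₗ[ℚ] ℚ) (L : Submodule ℤ V) :
    dualLattice B L →ₗ[ℤ] dualLattice B L →ₗ[ℤ] AddCircle (1 : ℚ) :=
  LinearMap.mk₂ ℤ (fun v w => ((B v.1 w.1 : ℚ) : AddCircle (1 : ℚ)))
    (fun v v' w => by
      beta_reduce
      rw [Submodule.coe_add, map_add, LinearMap.add_apply]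
      exact QuotientAddGroup.mk_add (AddSubgroup.zmultiples (1 : ℚ)) _ _)
    (fun c v w => by
      beta_reduce
      have h1 : B ((c • v : dualLattice B L) : V) (w : V)
          = c • (B (v : V) (w : V)) := by
        have h2 : B ((c • v : dualLattice B L) : V) (w : V)
            = (B.flip (w : V)) ((c • v : dualLattice B L) : V) := rfl
        rw [h2, Submodule.coe_smul, map_zsmul, LinearMap.flip_apply]
      rw [h1]
      exact QuotientAddGroup.mk_zsmul (AddSubgroup.zmultiples (1 : ℚ)) _ _
    )
    (fun v w w' => by
      beta_reduce
      rw [Submodule.coe_add, map_add]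
      exact QuotientAddGroup.mk_add (AddSubgroup.zmultiples (1 : ℚ)) _ _)
    (fun c v w => by
      beta_reduce
      rw [Submodule.coe_smul, map_zsmul]
      exact QuotientAddGroup.mk_zsmul (AddSubgroup.zmultiples (1 : ℚ)) _ _)

/-- The discriminant form on `D_Λ`, with values in `ℚ/ℤ`. -/
def discForm (B : V →ₗ[ℚ] V →ₗ[ℚ] ℚ) (L : Submodule ℤ V) (halt : ∀ v, B v v = 0) :
    DiscGroup B L →ₗ[ℤ] DiscGroup B L →ₗ[ℤ] AddCircle (1 : ℚ) :=
  (Submodule.liftQ _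
    ((Submodule.liftQ _ (rationalPairing B L) (by
      intro v hv
      rw [LinearMap.mem_ker]
      refine LinearMap.ext fun w => ?_
      have hv' : (v : V) ∈ L := hv
      obtain ⟨n, hn⟩ := w.2 (v : V) hv'
      show ((B (v : V) (w : V) : ℚ) : AddCircle (1 : ℚ)) = 0
      have h3 : B (v : V) (w : V) = ((-n : ℤ) : ℚ) := by
        rw [bilin_antisymm B halt, hn]; push_cast; ring
      rw [h3]
      exact coe_int_addCircle _)).flip) (by
      intro w hw
      rw [LinearMap.mem_ker]
      refine LinearMap.ext fun x => ?_
      obtain ⟨v, rfl⟩ := Submodule.Quotient.mk_surjective _ x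
      have hw' : (w : V) ∈ L := hw
      obtain ⟨n, hn⟩ := v.2 (w : V) hw'
      show ((B (v : V) (w : V) : ℚ) : AddCircle (1 : ℚ)) = 0
      rw [hn]
      exact coe_int_addCircle _)).flip

/-- The orthogonal complement of a subgroup of the discriminant group with respect to
the discriminant form. -/
def discOrth (B : V →ₗ[ℚ] V →ₗ[ℚ] ℚ) (L : Submodule ℤ V) (halt : ∀ v, B v v = 0)
    (D' : Submodule ℤ (DiscGroup B L)) : Submodule ℤ (DiscGroup B L) :=
  ⨅ y ∈ D', LinearMap.ker ((discForm B L halt).flip y)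

/-- A splitting element of the discriminant group: `x` of order `d` lies in a subgroup
`D' ≅ (ℤ/d)²` with `D_Λ = D' ⊕ D'^⊥`. -/
def IsSplitElem (B : V →ₗ[ℚ] V →ₗ[ℚ] ℚ) (L : Submodule ℤ V) (halt : ∀ v, B v v = 0)
    (x : DiscGroup B L) : Prop :=
  ∃ D' : Submodule ℤ (DiscGroup B L), x ∈ D' ∧
    Nonempty (D' ≃+ (ZMod (addOrderOf x) × ZMod (addOrderOf x))) ∧
    D' ⊔ discOrth B L halt D' = ⊤ ∧ D' ⊓ discOrth B L halt D' = ⊥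

/-- The orthogonal complement `Λ₁^⊥ = {z ∈ Λ : (z, Λ₁) = 0}` of a sublattice inside `L`. -/
def orthCompIn (B : V →ₗ[ℚ] V →ₗ[ℚ] ℚ) (L L₁ : Submodule ℤ V) : Submodule ℤ V where
  carrier := {z | z ∈ L ∧ ∀ y ∈ L₁, B z y = 0}
  zero_mem' := ⟨L.zero_mem, fun y _ => by simp⟩
  add_mem' := by
    intro a b ha hb
    refine ⟨L.add_mem ha.1 hb.1, fun y hy => ?_⟩
    rw [map_add, LinearMap.add_apply, ha.2 y hy, hb.2 y hy, add_zero]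
  smul_mem' := by
    intro c a ha
    refine ⟨L.smul_mem c ha.1, fun y hy => ?_⟩
    have h1 : B (c • a) y = (B.flip y) (c • a) := rfl
    rw [h1, map_zsmul, LinearMap.flip_apply, ha.2 y hy, smul_zero]

/-- A splitting (primitive) vector: `v` lies in a rank 2 sublattice `Λ₁` with
`Λ = Λ₁ ⊕ Λ₁^⊥` (orthogonal direct sum). -/
def IsSplitVec (B : V →ₗ[ℚ] V →ₗ[ℚ] ℚ) (L : Submodule ℤ V) (v : V) : Prop :=
  ∃ L₁ : Submodule ℤ V, v ∈ L₁ ∧ L₁ ≤ L ∧ Module.finrank ℤ L₁ = 2 ∧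
    L₁ ⊔ orthCompIn B L L₁ = L ∧ L₁ ⊓ orthCompIn B L L₁ = ⊥

end

/-!
The order of `[v*]` in the discriminant group is `div v`, so `v` and `w` have the same divisor `d`
and `u = v* - w*` lies in `Λ`. The transvection `T_{f,u}` belongs to `Γ_Λ`, because `f ⊥ u` and
both vectors are in `Λ ∩ Λ^∨`. It moves `d e` by `-d u = w - v`, and every other change it makes to
`v + d e` is a multiple of `f`, namely `(u, v) f`, where `d ∣ (u, v)`.
-/

section

open Submodule

variable {V : Type} [AddCommGroup V] [Module ℚ V] {B : V →ₗ[ℚ] V →ₗ[ℚ] ℚ} {L : Submodule ℤ V}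

lemma IsPrimitive.exists_int_eq_of_smul_mem {v : V} (hv : IsPrimitive L v) (hv0 : v ≠ 0) {q : ℚ}
    (hq : q • v ∈ L) : ∃ k : ℤ, q = k := by
  have hmem : q • v ∈ span ℤ {v} := by
    rw [← hv.2]
    exact ⟨smul_mem _ q (mem_span_singleton_self v), hq⟩
  obtain ⟨k, hk⟩ := mem_span_singleton.mp hmem
  rw [← Int.cast_smul_eq_zsmul ℚ] at hk
  exact ⟨k, (smul_left_injective ℚ hv0 hk).symm⟩

lemma HasDiv.ne_zero {v : V} {d : ℕ} (h : HasDiv B L v d) : v ≠ 0 := by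
  rintro rfl
  obtain ⟨x, -, hx⟩ := h.2.2
  exact h.1.ne (by simpa [eq_comm] using hx)

lemma HasDiv.smul_vstar {v : V} {d : ℕ} (h : HasDiv B L v d) : (d : ℚ) • vstar v d = v :=
  smul_inv_smul₀ (Nat.cast_ne_zero.mpr h.1.ne') v

lemma HasDiv.nsmul_vstar_mem_iff {v : V} {d : ℕ} (h : HasDiv B L v d) (hv : IsPrimitive L v)
    (n : ℕ) : n • vstar v d ∈ L ↔ d ∣ n := by
  have hd : (d : ℚ) ≠ 0 := Nat.cast_ne_zero.mpr h.1.ne'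
  rw [← Nat.cast_smul_eq_nsmul ℚ]
  constructor
  · intro hn
    rw [vstar, smul_smul, ← div_eq_mul_inv] at hn
    obtain ⟨k, hk⟩ := hv.exists_int_eq_of_smul_mem h.ne_zero hn
    have hnk : (n : ℤ) = d * k := by
      rw [div_eq_iff hd, mul_comm] at hk
      exact_mod_cast hk
    exact Int.natCast_dvd_natCast.mp ⟨k, hnk⟩
  · rintro ⟨k, rfl⟩
    rw [mul_comm, Nat.cast_mul, mul_smul, h.smul_vstar, Nat.cast_smul_eq_nsmul]
    exact nsmul_mem hv.1 k

lemma discCls_eq_iff {x y : dualLattice B L} :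
    discCls B L x = discCls B L y ↔ (x - y : V) ∈ L :=
  Submodule.Quotient.eq _

lemma nsmul_discCls_eq_zero_iff {x : dualLattice B L} {n : ℕ} :
    n • discCls B L x = 0 ↔ n • (x : V) ∈ L :=
  Submodule.Quotient.mk_eq_zero (x := n • x) _

lemma addOrderOf_discCls_vstar {v : V} {d : ℕ} (h : HasDiv B L v d) (hv : IsPrimitive L v) :
    addOrderOf (discCls B L ⟨vstar v d, vstar_mem h⟩) = d := by
  refine Nat.dvd_right_iff_eq.mp fun n ↦ ?_
  rw [addOrderOf_dvd_iff_nsmul_eq_zero, nsmul_discCls_eq_zero_iff, h.nsmul_vstar_mem_iff hv]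

lemma transvection_apply (l m x : V) : transvection B l m x = x + B l x • m + B m x • l :=
  rfl

lemma transvection_transvection_neg (hB : B.IsAlt) {l m : V} (hlm : B l m = 0) (x : V) :
    transvection B l m (transvection B l (-m) x) = x := by
  have hml : B m l = 0 := hB.isRefl l m hlm
  simp only [transvection_apply, map_add, map_smul, map_neg, LinearMap.neg_apply, hlm, hml,
    hB.self_eq_zero]
  module

lemma transvection_neg_transvection (hB : B.IsAlt) {l m : V} (hlm : B l m = 0) (x : V) :
    transvection B l (-m) (transvection B l m x) = x := by
  simpa using transvection_transvection_neg hB (m := -m) (by simpa using hlm) x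

/-- The transvection `T_{l,m}` along orthogonal vectors `l` and `m` as a linear automorphism, with
inverse `T_{l,-m}`. -/
def transvectionEquiv (hB : B.IsAlt) {l m : V} (hlm : B l m = 0) : V ≃ₗ[ℚ] V :=
  .ofLinearMap (transvection B l m) (transvection B l (-m))
    (LinearMap.ext (transvection_transvection_neg hB hlm))
    (LinearMap.ext (transvection_neg_transvection hB hlm))

lemma apply_transvection_transvection (hB : B.IsAlt) {l m : V} (hlm : B l m = 0) (x y : V) :
    B (transvection B l m x) (transvection B l m y) = B x y := by
  have hml : B m l = 0 := hB.isRefl l m hlm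
  simp only [transvection_apply, map_add, map_smul, LinearMap.add_apply, LinearMap.smul_apply,
    hlm, hml, hB.self_eq_zero, smul_eq_mul, ← hB.neg l x, ← hB.neg m x]
  ring

lemma transvection_mem {l m x : V} (hl : l ∈ L) (hm : m ∈ L) (hl' : l ∈ dualLattice B L)
    (hm' : m ∈ dualLattice B L) (hx : x ∈ L) : transvection B l m x ∈ L := by
  obtain ⟨a, ha⟩ := hl' x hx
  obtain ⟨b, hb⟩ := hm' x hx
  rw [transvection_apply, ha, hb, Int.cast_smul_eq_zsmul, Int.cast_smul_eq_zsmul]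
  exact add_mem (add_mem hx (zsmul_mem hm a)) (zsmul_mem hl b)

lemma transvection_sub_self_mem (hB : B.IsAlt) {l m x : V} (hl : l ∈ L) (hm : m ∈ L)
    (hx : x ∈ dualLattice B L) : transvection B l m x - x ∈ L := by
  obtain ⟨a, ha⟩ := hx l hl
  obtain ⟨b, hb⟩ := hx m hm
  rw [transvection_apply, add_assoc, add_sub_cancel_left, ← hB.neg x l, ← hB.neg x m, ha, hb,
    neg_smul, neg_smul, Int.cast_smul_eq_zsmul, Int.cast_smul_eq_zsmul]
  exact add_mem (neg_mem (zsmul_mem hm a)) (neg_mem (zsmul_mem hl b))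

lemma inGamma_transvectionEquiv (hB : B.IsAlt) {l m : V} (hlm : B l m = 0) (hl : l ∈ L)
    (hm : m ∈ L) (hl' : l ∈ dualLattice B L) (hm' : m ∈ dualLattice B L) :
    InGamma B L (transvectionEquiv hB hlm) := by
  refine ⟨⟨fun x ↦ ⟨transvection_mem hl hm hl' hm', fun hx ↦ ?_⟩,
    apply_transvection_transvection hB hlm⟩, fun x ↦ transvection_sub_self_mem hB hl hm⟩
  rw [← (transvectionEquiv hB hlm).symm_apply_apply x]
  exact transvection_mem hl (neg_mem hm) hl' (neg_mem hm') hx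

lemma transvection_add_smul {e f u v : V} (hfe : B f e = -1) (hfv : B f v = 0) (hue : B u e = 0)
    (c : ℚ) : transvection B f u (v + c • e) = v - c • u + c • e + B u v • f := by
  simp only [transvection_apply, map_add, map_smul, hfe, hfv, hue]
  module

lemma OrthoDecompU.right_mem_dualLattice (hB : B.IsAlt) {e f : V} {L' : Submodule ℤ V}
    (h : OrthoDecompU B L e f L') : f ∈ dualLattice B L := by
  obtain ⟨-, -, -, hef, horth, hsup⟩ := h
  intro x hx
  rw [← hsup] at hx
  obtain ⟨y, hy, z, hz, rfl⟩ := mem_sup.mp hx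
  obtain ⟨a, b, rfl⟩ := mem_span_pair.mp hy
  refine ⟨-a, ?_⟩
  simp only [map_add, map_zsmul, ← hB.neg e f, hef, hB.self_eq_zero, (horth z hz).2,
    zsmul_eq_mul, Int.cast_neg]
  ring

end

theorem gamma_connect_translates_general
    {V : Type} [AddCommGroup V] [Module ℚ V]
    (B : V →ₗ[ℚ] V →ₗ[ℚ] ℚ) (hB : B.IsAlt)
    (L : Submodule ℤ V) (e f : V) (L' : Submodule ℤ V) (hdec : OrthoDecompU B L e f L')
    (v w : V) (hv' : v ∈ L') (hw' : w ∈ L') (hv : IsPrimitive L v) (hw : IsPrimitive L w)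
    (d dw : ℕ) (hdv : HasDiv B L v d) (hdw : HasDiv B L w dw)
    (hcls : discCls B L ⟨vstar v d, vstar_mem hdv⟩ =
      discCls B L ⟨vstar w dw, vstar_mem hdw⟩) :
    ∃ (γ : V ≃ₗ[ℚ] V) (α : ℤ), InGamma B L γ ∧
      γ (v + (d : ℤ) • e) = w + (d : ℤ) • e + ((d : ℤ) * α) • f := by
  obtain rfl : d = dw := by
    rw [← addOrderOf_discCls_vstar hdv hv, hcls, addOrderOf_discCls_vstar hdw hw]
  have hfL' : f ∈ dualLattice B L := hdec.right_mem_dualLattice hB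
  obtain ⟨-, hfL, -, hef, horth, -⟩ := hdec
  set u : V := vstar v d - vstar w d with hu
  have huL : u ∈ L := discCls_eq_iff.mp hcls
  have huL' : u ∈ dualLattice B L := sub_mem (vstar_mem hdv) (vstar_mem hdw)
  have heu : B e u = 0 := by simp [hu, vstar, horth v hv', horth w hw']
  have hfu : B f u = 0 := by simp [hu, vstar, horth v hv', horth w hw']
  have hdu : v - (d : ℚ) • u = w := by
    rw [hu, smul_sub, hdv.smul_vstar, hdw.smul_vstar, sub_sub_cancel]
  have hfe : B f e = -1 := by rw [← hB.neg, hef]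
  obtain ⟨n, hn⟩ := hdv.2.1 u huL
  have huv : B u v = ((d * -n : ℤ) : ℚ) := by
    rw [← hB.neg, hn]
    push_cast
    ring
  refine ⟨transvectionEquiv hB hfu, -n,
    inGamma_transvectionEquiv hB hfu hfL huL hfL' huL', ?_⟩
  have haction := transvection_add_smul hfe (horth v hv').2 (hB.isRefl e u heu) (d : ℚ)
  rw [hdu, huv, Int.cast_smul_eq_zsmul, Nat.cast_smul_eq_nsmul, ← natCast_zsmul] at haction
  exact haction

/-- **Step 3.** If `Λ = U ⊕ Λ'` with `U = ⟨e, f⟩`, `(e,f) = 1`, and `v, w ∈ Λ'` are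
primitive in `Λ` with `[v*] = [w*]` and `d = div(v)`, then there are `γ ∈ Γ_Λ` and
`α ∈ ℤ` with `γ(v + de) = w + de + dα f`. -/
theorem gamma_connect_translates
    (V : Type) [AddCommGroup V] [Module ℚ V]
    (B : V →ₗ[ℚ] V →ₗ[ℚ] ℚ)
    (halt : ∀ v, B v v = 0)
    (hnd : ∀ v : V, (∀ w, B v w = 0) → v = 0)
    (L : Submodule ℤ V) (hfg : L.FG)
    (hspan : Submodule.span ℚ (L : Set V) = ⊤)
    (hint : ∀ x ∈ L, ∀ y ∈ L, ∃ n : ℤ, B x y = (n : ℚ))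
    (e f : V) (L' : Submodule ℤ V)
    (hdec : OrthoDecompU B L e f L')
    (v w : V) (hv' : v ∈ L') (hw' : w ∈ L')
    (hv : IsPrimitive L v) (hw : IsPrimitive L w)
    (d dw : ℕ) (hdv : HasDiv B L v d) (hdw : HasDiv B L w dw)
    (hcls : discCls B L ⟨vstar v d, vstar_mem hdv⟩ =
      discCls B L ⟨vstar w dw, vstar_mem hdw⟩) :
    ∃ (γ : V ≃ₗ[ℚ] V) (α : ℤ), InGamma B L γ ∧
      γ (v + (d : ℤ) • e) = w + (d : ℤ) • e + ((d : ℤ) * α) • f :=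
  gamma_connect_translates_general B halt L e f L' hdec v w hv' hw' hv hw d dw hdv hdw hcls
end

section
/- Let p be a prime and let Λ = U ⊕ U(p) ⊕ ⋯ ⊕ U(p) (one copy of U and g−1 copies of U(p), orthogonal direct sum). If v ∈ Λ is a primitive vector with div(v) = 1, then v is Γ_Λ-equivalent to a vector lying in the U component. -/
/-!
If two lattice vectors satisfy `(v, v') = 1`, the symplectic transvection `x ↦ x + (x, w) w` along
`w = v' - v` carries `v` to `v'`, and it lies in `Γ_Λ` because `(x, w) ∈ ℤ` for every `x ∈ Λ^∨`.
So it suffices to join `v` to a vector `u ∈ U` by a chain of lattice vectors with consecutive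
pairings `1`, and a single intermediate vector is enough: as `U` has rank two, some primitive
`y ∈ U` satisfies `(v, y) = 0`; choose `u ∈ U` with `(y, u) = 1` and `x ∈ Λ` with `(v, x) = 1`.
Then `w = x + (1 - (x, u)) y` satisfies `(v, w) = 1 = (w, u)`.
-/

section SymplecticTransvection

variable {R M : Type*} [CommRing R] [AddCommGroup M] [Module R M]
  {B : M →ₗ[R] M →ₗ[R] R}

/-- The symplectic transvection `x ↦ x + (x, w) w` along `w`; the two-vector transvection
`T_{w,w}` is the inverse of its square. -/
def symplecticTransvection (hB : B.IsAlt) (w : M) : M ≃ₗ[R] M :=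
  LinearEquiv.transvection (f := B.flip w) (v := w) (hB w)

theorem symplecticTransvection_apply (hB : B.IsAlt) (w x : M) :
    symplecticTransvection hB w x = x + B x w • w := rfl

theorem apply_symplecticTransvection_self (hB : B.IsAlt) (w x : M) :
    B (symplecticTransvection hB w x) w = B x w := by
  simp [symplecticTransvection_apply, hB.self_eq_zero]

theorem apply_symplecticTransvection_symplecticTransvection (hB : B.IsAlt) (w x y : M) :
    B (symplecticTransvection hB w x) (symplecticTransvection hB w y) = B x y := by
  simp only [symplecticTransvection_apply, map_add, map_smul, LinearMap.add_apply,
    LinearMap.smul_apply, smul_eq_mul, hB.self_eq_zero, ← hB.neg y w]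
  ring

theorem symplecticTransvection_sub_apply_of_apply_eq_one (hB : B.IsAlt) {x y : M}
    (hxy : B x y = 1) : symplecticTransvection hB (y - x) x = y := by
  simp [symplecticTransvection_apply, hxy, hB.self_eq_zero]

end SymplecticTransvection

section GammaEquiv

variable {V : Type} [AddCommGroup V] [Module ℚ V] {B : V →ₗ[ℚ] V →ₗ[ℚ] ℚ} {L : Submodule ℤ V}

theorem InGamma.trans {γ δ : V ≃ₗ[ℚ] V} (hγ : InGamma B L γ) (hδ : InGamma B L δ) :
    InGamma B L (γ.trans δ) := by
  refine ⟨⟨fun x => (hγ.1.1 x).trans (hδ.1.1 (γ x)),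
    fun x y => (hδ.1.2 (γ x) (γ y)).trans (hγ.1.2 x y)⟩, fun x hx => ?_⟩
  rw [LinearEquiv.trans_apply, ← sub_add_sub_cancel _ (γ x)]
  exact L.add_mem (hδ.2 _ (isometry_dual_mem hγ.1 hx)) (hγ.2 x hx)

theorem apply_smul_mem_of_mem_dualLattice {x w : V} (hx : x ∈ dualLattice B L) (hw : w ∈ L) :
    B x w • w ∈ L := by
  obtain ⟨n, hn⟩ := hx w hw
  rw [hn, Int.cast_smul_eq_zsmul]
  exact L.smul_mem n hw

theorem inGamma_symplecticTransvection (hB : B.IsAlt) (hL : L ≤ dualLattice B L) {w : V}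
    (hw : w ∈ L) : InGamma B L (symplecticTransvection hB w) := by
  refine ⟨⟨fun x => ⟨fun hx => ?_, fun hx => ?_⟩,
    apply_symplecticTransvection_symplecticTransvection hB w⟩, fun x hx => ?_⟩
  · exact L.add_mem hx (apply_smul_mem_of_mem_dualLattice (hL hx) hw)
  · have hxw := apply_smul_mem_of_mem_dualLattice (hL hx) hw
    rw [apply_symplecticTransvection_self] at hxw
    exact (L.add_mem_iff_left hxw).mp hx
  · rw [symplecticTransvection_apply, add_sub_cancel_left]
    exact apply_smul_mem_of_mem_dualLattice hx hw

/-- `Γ_Λ`-equivalence: `v` and `v'` lie in one orbit of `Γ_Λ` acting on `Λ ⊗ ℚ`. -/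
def GammaEquiv (B : V →ₗ[ℚ] V →ₗ[ℚ] ℚ) (L : Submodule ℤ V) (v v' : V) : Prop :=
  ∃ γ : V ≃ₗ[ℚ] V, InGamma B L γ ∧ γ v = v'

theorem GammaEquiv.trans {u v w : V} (huv : GammaEquiv B L u v) (hvw : GammaEquiv B L v w) :
    GammaEquiv B L u w := by
  obtain ⟨γ, hγ, rfl⟩ := huv
  obtain ⟨δ, hδ, rfl⟩ := hvw
  exact ⟨γ.trans δ, hγ.trans hδ, rfl⟩

theorem gammaEquiv_of_apply_eq_one (hB : B.IsAlt) (hL : L ≤ dualLattice B L) {v v' : V}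
    (hvv' : v' - v ∈ L) (h : B v v' = 1) : GammaEquiv B L v v' :=
  ⟨_, inGamma_symplecticTransvection hB hL hvv',
    symplecticTransvection_sub_apply_of_apply_eq_one hB h⟩

theorem gammaEquiv_of_apply_eq_zero_of_apply_eq_one (hB : B.IsAlt) (hL : L ≤ dualLattice B L)
    {u v x y : V} (hu : u ∈ L) (hv : v ∈ L) (hx : x ∈ L) (hy : y ∈ L)
    (hvx : B v x = 1) (hvy : B v y = 0) (hyu : B y u = 1) : GammaEquiv B L v u := by
  obtain ⟨n, hn⟩ := hL hx u hu
  let w : V := x + (1 - n) • y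
  have hw : w ∈ L := L.add_mem hx (L.smul_mem _ hy)
  have hvw : B v w = 1 := by simp [w, hvx, hvy]
  have hwu : B w u = 1 := by simp [w, hn, hyu]
  exact (gammaEquiv_of_apply_eq_one hB hL (L.sub_mem hw hv) hvw).trans
    (gammaEquiv_of_apply_eq_one hB hL (L.sub_mem hu hw) hwu)

end GammaEquiv

section HyperbolicPlane

theorem exists_isCoprime_mul_add_mul_eq_zero {R : Type*} [CommRing R] [IsDomain R] [IsBezout R]
    (a b : R) : ∃ c d : R, IsCoprime c d ∧ a * c + b * d = 0 := by
  classical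
  let := IsBezout.toGCDDomain R
  obtain ⟨a', b', ha, hb, hab⟩ := extract_gcd a b
  refine ⟨b', -a', ((gcd_isUnit_iff a' b').mp hab).symm.neg_right, ?_⟩
  linear_combination b' * ha - a' * hb

theorem exists_mem_span_pair_apply_eq_zero_apply_eq_one {R K M : Type*} [CommRing R] [IsDomain R]
    [IsBezout R] [CommRing K] [Algebra R K] [AddCommGroup M] [Module R M] [Module K M]
    [IsScalarTower R K M] {B : M →ₗ[K] M →ₗ[K] K} (hB : B.IsAlt) {e f : M} (hef : B e f = 1)
    (φ : M →ₗ[K] K) (he : φ e ∈ (algebraMap R K).range) (hf : φ f ∈ (algebraMap R K).range) :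
    ∃ y ∈ Submodule.span R {e, f}, ∃ u ∈ Submodule.span R {e, f}, φ y = 0 ∧ B y u = 1 := by
  obtain ⟨a, ha⟩ := he
  obtain ⟨b, hb⟩ := hf
  obtain ⟨c, d, ⟨r, s, hrs⟩, hcd⟩ := exists_isCoprime_mul_add_mul_eq_zero a b
  refine ⟨c • e + d • f, Submodule.mem_span_pair.mpr ⟨c, d, rfl⟩,
    (-s) • e + r • f, Submodule.mem_span_pair.mpr ⟨-s, r, rfl⟩, ?_, ?_⟩
  · have hcd' : algebraMap R K (a * c + b * d) = 0 := by rw [hcd, map_zero]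
    simp only [map_add, map_mul] at hcd'
    simp only [map_add, LinearMap.map_smul_of_tower, Algebra.smul_def, ← ha, ← hb]
    linear_combination hcd'
  · have hrs' : algebraMap R K (r * c + s * d) = 1 := by rw [hrs, map_one]
    simp only [map_add, map_mul] at hrs'
    simp only [map_add, LinearMap.map_smul_of_tower, LinearMap.add_apply, LinearMap.smul_apply,
      Algebra.smul_def, map_neg, hB.self_eq_zero, ← hB.neg e f, hef]
    linear_combination hrs'

end HyperbolicPlane

theorem short_vector_into_U_general {V : Type} [AddCommGroup V] [Module ℚ V]
    {B : V →ₗ[ℚ] V →ₗ[ℚ] ℚ} (hB : B.IsAlt) {L : Submodule ℤ V} (hL : L ≤ dualLattice B L)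
    {e f : V} (he : e ∈ L) (hf : f ∈ L) (hef : B e f = 1)
    {v x : V} (hv : v ∈ L) (hx : x ∈ L) (hvx : B v x = 1) :
    ∃ γ : V ≃ₗ[ℚ] V, InGamma B L γ ∧ γ v ∈ Submodule.span ℤ {e, f} := by
  have hU : Submodule.span ℤ {e, f} ≤ L := Submodule.span_le.mpr (Set.pair_subset he hf)
  have hvZ : ∀ z ∈ L, B v z ∈ (algebraMap ℤ ℚ).range := fun z hz =>
    (hL hv z hz).imp fun _ hn => hn.symm
  obtain ⟨y, hy, u, hu, hvy, hyu⟩ :=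
    exists_mem_span_pair_apply_eq_zero_apply_eq_one hB hef (B v) (hvZ e he) (hvZ f hf)
  obtain ⟨γ, hγ, rfl⟩ := gammaEquiv_of_apply_eq_zero_of_apply_eq_one hB hL (hU hu) hv hx (hU hy)
    hvx hvy hyu
  exact ⟨γ, hγ, hu⟩

/-- For `Λ = U ⊕ U(p) ⊕ ⋯ ⊕ U(p)` with `p` prime, a primitive vector with
`div(v) = 1` is `Γ_Λ`-equivalent to a vector of the `U` component. -/
theorem short_vector_into_U
    (V : Type) [AddCommGroup V] [Module ℚ V]
    (B : V →ₗ[ℚ] V →ₗ[ℚ] ℚ)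
    (halt : ∀ v, B v v = 0)
    (hnd : ∀ v : V, (∀ w, B v w = 0) → v = 0)
    (L : Submodule ℤ V) (hfg : L.FG)
    (hspan : Submodule.span ℚ (L : Set V) = ⊤)
    (hint : ∀ x ∈ L, ∀ y ∈ L, ∃ n : ℤ, B x y = (n : ℚ))
    (p : ℕ) (hp : p.Prime) (ι : Type) [Fintype ι]
    (e f : V) (E F : ι → V)
    (hdec : OrthoDecompUUp B L p e f E F)
    (v : V) (hv : IsPrimitive L v) (hdiv : HasDiv B L v 1) :
    ∃ γ : V ≃ₗ[ℚ] V, InGamma B L γ ∧ γ v ∈ Submodule.span ℤ {e, f} := by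
  obtain ⟨he, hf, -, -, hef, -⟩ := hdec
  obtain ⟨-, -, x, hx, hvx⟩ := hdiv
  exact short_vector_into_U_general halt hint he hf hef hv.1 hx (by simpa using hvx)
end

section
/- Let Λ be a symplectic lattice and let x be an element of the discriminant group D_Λ of order d. The following four conditions are equivalent: (1) x is contained in a subgroup D₁ of D_Λ isomorphic to (ℤ/d)² with D_Λ = D₁ ⊕ D₁^⊥; (2) x is contained in a subgroup D₁ of D_Λ isomorphic to (ℤ/d)² on which the induced ℚ/ℤ-valued form is nondegenerate; (3) there exists y ∈ D_Λ such that D_Λ = ⟨x, y⟩ ⊕ ⟨x, y⟩^⊥; (4) there exists y ∈ D_Λ of order d with (x, y) = 1/d in ℚ/ℤ. -/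
/-! The idea: if `x` has order `d` and lies in a subgroup `S` on which the form is nondegenerate,
then the character `(x, ·)` of `S` also has order `d`, and a character of order `d` takes the value
`1/d`; this produces `y`. Conversely, if `x` and `y` have order `d` and `(x, y) = 1/d`, then
`⟨x, y⟩ ≅ (ℤ/d)²`, and `z ↦ (x, z) d y - (y, z) d x` is a well-defined orthogonal projection onto
`⟨x, y⟩`, since `(x, z)` and `(y, z)` lie in `(1/d)ℤ/ℤ`. -/

section CharacterOfFiniteOrder

theorem addOrderOf_coe_inv_natCast {d : ℕ} (hd : 0 < d) :
    addOrderOf (((d : ℚ)⁻¹ : ℚ) : AddCircle (1 : ℚ)) = d := by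
  simpa only [one_div] using AddCircle.addOrderOf_period_div (p := (1 : ℚ)) hd

theorem mem_zmultiples_coe_inv_of_nsmul_eq_zero {d : ℕ} (hd : 0 < d) {u : AddCircle (1 : ℚ)}
    (hu : d • u = 0) : u ∈ AddSubgroup.zmultiples (((d : ℚ)⁻¹ : ℚ) : AddCircle (1 : ℚ)) := by
  obtain ⟨m, -, rfl⟩ := (AddCircle.nsmul_eq_zero_iff hd).1 hu
  rw [AddCircle.natCast_div_mul_eq_nsmul, one_div]
  exact AddSubgroup.nsmul_mem_zmultiples _ m

theorem exists_apply_eq_coe_inv_addOrderOf {A : Type*} [AddCommGroup A]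
    (χ : A →ₗ[ℤ] AddCircle (1 : ℚ)) (hχ : 0 < addOrderOf χ) :
    ∃ a, χ a = (((addOrderOf χ : ℚ)⁻¹ : ℚ) : AddCircle (1 : ℚ)) := by
  set e : AddCircle (1 : ℚ) := (((addOrderOf χ : ℚ)⁻¹ : ℚ) : AddCircle (1 : ℚ))
  have he : addOrderOf e = addOrderOf χ := addOrderOf_coe_inv_natCast hχ
  have range_le : χ.toAddMonoidHom.range ≤ AddSubgroup.zmultiples e := by
    rintro _ ⟨a, rfl⟩
    exact mem_zmultiples_coe_inv_of_nsmul_eq_zero hχ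
      (LinearMap.congr_fun (addOrderOf_nsmul_eq_zero χ) a)
  have finite_zmultiples : Finite (AddSubgroup.zmultiples e) :=
    Nat.finite_of_card_ne_zero (by rw [Nat.card_zmultiples, he]; exact hχ.ne')
  have finite_range : Finite χ.toAddMonoidHom.range :=
    Finite.of_injective _ (AddSubgroup.inclusion_injective range_le)
  have card_smul : Nat.card χ.toAddMonoidHom.range • χ = 0 := by
    ext a
    exact congrArg Subtype.val (card_nsmul_eq_zero' (x := (⟨χ a, a, rfl⟩ : χ.toAddMonoidHom.range)))
  have range_eq : χ.toAddMonoidHom.range = AddSubgroup.zmultiples e := by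
    refine AddSubgroup.eq_of_le_of_card_ge range_le ?_
    rw [Nat.card_zmultiples, he]
    exact Nat.le_of_dvd Nat.card_pos (addOrderOf_dvd_of_nsmul_eq_zero card_smul)
  exact range_eq.ge (AddSubgroup.mem_zmultiples e)

end CharacterOfFiniteOrder

section SpanPair

theorem nonempty_span_pair_addEquiv_zmod {D : Type*} [AddCommGroup D] {x y : D}
    (h : Disjoint (Submodule.span ℤ {x}) (Submodule.span ℤ {y})) :
    Nonempty (Submodule.span ℤ {x, y} ≃+ ZMod (addOrderOf x) × ZMod (addOrderOf y)) := by
  let cyclic (z : D) : Submodule.span ℤ {z} ≃+ ZMod (addOrderOf z) :=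
    (CharacterModule.intSpanEquivQuotAddOrderOf z).toAddEquiv.trans
      (Int.quotientSpanNatEquivZMod (addOrderOf z)).toAddEquiv
  let sum := (Submodule.span ℤ {x}).subtype.coprod (Submodule.span ℤ {y}).subtype
  have ker_sum : LinearMap.ker sum = ⊥ := by
    rw [LinearMap.ker_coprod_of_disjoint_range _ _ (by simpa only [Submodule.range_subtype]),
      Submodule.ker_subtype, Submodule.ker_subtype, Submodule.prod_bot]
  have range_sum : LinearMap.range sum = Submodule.span ℤ {x, y} := by
    rw [LinearMap.range_coprod, Submodule.range_subtype, Submodule.range_subtype,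
      ← Submodule.span_insert]
  rw [← range_sum]
  exact ⟨(LinearEquiv.ofInjective sum (LinearMap.ker_eq_bot.1 ker_sum)).symm.toAddEquiv.trans
    ((cyclic x).prodCongr (cyclic y))⟩

variable {R M N : Type*} [CommRing R] [AddCommGroup M] [Module R M] [AddCommGroup N] [Module R N]
  {b : M →ₗ[R] M →ₗ[R] N} {x y : M}

theorem mem_orthogonalBilin_span_pair_iff {z : M} :
    z ∈ (Submodule.span R {x, y}).orthogonalBilin b ↔ b x z = 0 ∧ b y z = 0 := by
  change Submodule.span R {x, y} ≤ LinearMap.ker (b.flip z) ↔ _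
  simp [Submodule.span_le, Set.insert_subset_iff]

theorem smul_eq_zero_of_mem_span_pair (hb : b.IsAlt)
    (hdisj : Disjoint (Submodule.span R {x, y}) ((Submodule.span R {x, y}).orthogonalBilin b))
    {r : R} (hx : r • x = 0) {z : M} (hz : z ∈ Submodule.span R {x, y}) : r • z = 0 := by
  have hy : r • y = 0 := by
    refine Submodule.disjoint_def.1 hdisj _
      (Submodule.smul_mem _ r (Submodule.mem_span_of_mem (by simp))) ?_
    rw [mem_orthogonalBilin_span_pair_iff, map_smul, map_smul, hb.self_eq_zero, smul_zero,
      ← LinearMap.smul_apply, ← map_smul, hx]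
    simp
  obtain ⟨p, q, rfl⟩ := Submodule.mem_span_pair.1 hz
  rw [smul_add, smul_comm, hx, smul_comm, hy, smul_zero, smul_zero, add_zero]

theorem nondegenerate_domRestrict₁₂_iff (hb : b.IsRefl) (S : Submodule R M) :
    (b.domRestrict₁₂ S S).Nondegenerate ↔ ∀ z ∈ S, (∀ y ∈ S, b z y = 0) → z = 0 := by
  rw [(hb.domRestrict S).nondegenerate_iff_separatingLeft]
  simp [LinearMap.SeparatingLeft, LinearMap.domRestrict₁₂_apply]

end SpanPair

/-- The elements `x` and `y` form a hyperbolic pair of level `d` for the `ℚ/ℤ`-valued form `b`: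
both have order `d`, and `b x y = 1/d`. These are the generators of the discriminant group of the
rescaled hyperbolic plane `U(d)`. -/
structure IsHyperbolicPair {D : Type*} [AddCommGroup D] (b : D →ₗ[ℤ] D →ₗ[ℤ] AddCircle (1 : ℚ))
    (d : ℕ) (x y : D) : Prop where
  addOrderOf_left : addOrderOf x = d
  addOrderOf_right : addOrderOf y = d
  apply_eq : b x y = (((d : ℚ)⁻¹ : ℚ) : AddCircle (1 : ℚ))

section HyperbolicPair

variable {D : Type*} [AddCommGroup D] {b : D →ₗ[ℤ] D →ₗ[ℤ] AddCircle (1 : ℚ)} {d : ℕ} {x y : D}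

theorem exists_isHyperbolicPair_of_nondegenerate {S : Submodule ℤ D}
    (hS : (b.domRestrict₁₂ S S).Nondegenerate) (hxS : x ∈ S) (hd : 0 < d) (hx : addOrderOf x = d)
    (htors : ∀ z ∈ S, d • z = 0) : ∃ y, IsHyperbolicPair b d x y := by
  let χ := b.domRestrict₁₂ S S ⟨x, hxS⟩
  have hχ : addOrderOf χ = d := by
    have inj : Function.Injective (b.domRestrict₁₂ S S).toAddMonoidHom :=
      LinearMap.ker_eq_bot.1 (LinearMap.separatingLeft_iff_ker_eq_bot.1 hS.1)
    calc addOrderOf χ = addOrderOf (⟨x, hxS⟩ : S) := addOrderOf_injective _ inj _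
      _ = addOrderOf x :=
        (addOrderOf_injective S.subtype.toAddMonoidHom S.injective_subtype _).symm
      _ = d := hx
  obtain ⟨⟨y, hyS⟩, hxy⟩ := exists_apply_eq_coe_inv_addOrderOf χ (hχ ▸ hd)
  replace hxy : b x y = (((d : ℚ)⁻¹ : ℚ) : AddCircle (1 : ℚ)) := hχ ▸ hxy
  refine ⟨y, hx, Nat.dvd_antisymm (addOrderOf_dvd_of_nsmul_eq_zero (htors y hyS)) ?_, hxy⟩
  calc d = addOrderOf (b x y) := by rw [hxy, addOrderOf_coe_inv_natCast hd]
    _ ∣ addOrderOf y := addOrderOf_map_dvd (b x).toAddMonoidHom y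

namespace IsHyperbolicPair

theorem zsmul_eq_zero (h : IsHyperbolicPair b d x y) (hd : 0 < d) {n : ℤ} (hn : n • b x y = 0) :
    n • x = 0 ∧ n • y = 0 := by
  rw [← addOrderOf_dvd_iff_zsmul_eq_zero, h.apply_eq, addOrderOf_coe_inv_natCast hd] at hn
  simpa only [← addOrderOf_dvd_iff_zsmul_eq_zero, h.addOrderOf_left, h.addOrderOf_right, and_self]

theorem disjoint_span (h : IsHyperbolicPair b d x y) (hb : b.IsAlt) (hd : 0 < d) :
    Disjoint (Submodule.span ℤ {x}) (Submodule.span ℤ {y}) := by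
  rw [Submodule.disjoint_def]
  intro z hzx hzy
  obtain ⟨p, rfl⟩ := Submodule.mem_span_singleton.1 hzx
  obtain ⟨q, hq⟩ := Submodule.mem_span_singleton.1 hzy
  refine (h.zsmul_eq_zero hd ?_).1
  rw [← LinearMap.smul_apply, ← map_smul, ← hq, map_smul, LinearMap.smul_apply, hb.self_eq_zero,
    smul_zero]

theorem nonempty_span_addEquiv (h : IsHyperbolicPair b d x y) (hb : b.IsAlt) (hd : 0 < d) :
    Nonempty (Submodule.span ℤ {x, y} ≃+ ZMod d × ZMod d) := by
  have hiso := nonempty_span_pair_addEquiv_zmod (h.disjoint_span hb hd)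
  rwa [h.addOrderOf_left, h.addOrderOf_right] at hiso

theorem disjoint_orthogonalBilin (h : IsHyperbolicPair b d x y) (hb : b.IsAlt) (hd : 0 < d) :
    Disjoint (Submodule.span ℤ {x, y}) ((Submodule.span ℤ {x, y}).orthogonalBilin b) := by
  rw [Submodule.disjoint_def]
  intro z hz hz_orth
  obtain ⟨p, q, rfl⟩ := Submodule.mem_span_pair.1 hz
  obtain ⟨hx, hy⟩ := mem_orthogonalBilin_span_pair_iff.1 hz_orth
  have hq : q • b x y = 0 := by simpa [hb.self_eq_zero] using hx
  have hp : p • b x y = 0 := by simpa [hb.self_eq_zero, ← hb.neg x y] using hy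
  rw [(h.zsmul_eq_zero hd hp).1, (h.zsmul_eq_zero hd hq).2, add_zero]

theorem codisjoint_orthogonalBilin (h : IsHyperbolicPair b d x y) (hb : b.IsAlt) (hd : 0 < d) :
    Codisjoint (Submodule.span ℤ {x, y}) ((Submodule.span ℤ {x, y}).orthogonalBilin b) := by
  have exists_zsmul {w : D} (hw : addOrderOf w = d) (z : D) : ∃ n : ℤ, n • b x y = b w z := by
    rw [h.apply_eq]
    refine mem_zmultiples_coe_inv_of_nsmul_eq_zero hd ?_
    rw [← LinearMap.smul_apply, ← map_nsmul, ← hw, addOrderOf_nsmul_eq_zero, map_zero,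
      LinearMap.zero_apply]
  rw [codisjoint_iff, Submodule.eq_top_iff']
  intro z
  obtain ⟨q, hq⟩ := exists_zsmul h.addOrderOf_left z
  obtain ⟨p, hp⟩ := exists_zsmul h.addOrderOf_right z
  refine Submodule.mem_sup.2 ⟨-p • x + q • y, Submodule.mem_span_pair.2 ⟨-p, q, rfl⟩,
    z - (-p • x + q • y), ?_, add_sub_cancel _ _⟩
  rw [mem_orthogonalBilin_span_pair_iff]
  constructor
  · simp [hb.self_eq_zero, hq]
  · simp [hb.self_eq_zero, ← hb.neg x y, hp]

theorem isCompl_orthogonalBilin (h : IsHyperbolicPair b d x y) (hb : b.IsAlt) (hd : 0 < d) :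
    IsCompl (Submodule.span ℤ {x, y}) ((Submodule.span ℤ {x, y}).orthogonalBilin b) :=
  ⟨h.disjoint_orthogonalBilin hb hd, h.codisjoint_orthogonalBilin hb hd⟩

end IsHyperbolicPair

theorem splitting_element_characterizations_general (hb : b.IsAlt) (hd : 0 < d)
    (hx : addOrderOf x = d) :
    List.TFAE [
      ∃ D₁ : Submodule ℤ D, x ∈ D₁ ∧ Nonempty (D₁ ≃+ (ZMod d × ZMod d)) ∧
        IsCompl D₁ (D₁.orthogonalBilin b),
      ∃ D₁ : Submodule ℤ D, x ∈ D₁ ∧ Nonempty (D₁ ≃+ (ZMod d × ZMod d)) ∧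
        (b.domRestrict₁₂ D₁ D₁).Nondegenerate,
      ∃ y, IsCompl (Submodule.span ℤ {x, y}) ((Submodule.span ℤ {x, y}).orthogonalBilin b),
      ∃ y, addOrderOf y = d ∧ b x y = (((d : ℚ)⁻¹ : ℚ) : AddCircle (1 : ℚ))] := by
  have mem_span (y : D) : x ∈ Submodule.span ℤ {x, y} := Submodule.mem_span_of_mem (by simp)
  tfae_have 1 → 2 := fun ⟨S, hxS, hiso, hS⟩ ↦
    ⟨S, hxS, hiso, LinearMap.nondegenerate_restrict_of_disjoint_orthogonal hb.isRefl hS.disjoint⟩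
  tfae_have 2 → 4 := by
    rintro ⟨S, hxS, ⟨φ⟩, hS⟩
    have htors (z : D) (hz : z ∈ S) : d • z = 0 :=
      congrArg Subtype.val (show d • (⟨z, hz⟩ : S) = 0 from
        φ.injective (by rw [map_nsmul, map_zero]; ext <;> simp))
    obtain ⟨y, hxy⟩ := exists_isHyperbolicPair_of_nondegenerate hS hxS hd hx htors
    exact ⟨y, hxy.addOrderOf_right, hxy.apply_eq⟩
  tfae_have 3 → 4 := by
    rintro ⟨y, hy⟩
    have hdx : (d : ℤ) • x = 0 := by rw [natCast_zsmul, ← hx, addOrderOf_nsmul_eq_zero]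
    obtain ⟨y, hxy⟩ := exists_isHyperbolicPair_of_nondegenerate
      (LinearMap.nondegenerate_restrict_of_disjoint_orthogonal hb.isRefl hy.disjoint)
      (mem_span y) hd hx fun z hz ↦ by
        simpa only [natCast_zsmul] using smul_eq_zero_of_mem_span_pair hb hy.disjoint hdx hz
    exact ⟨y, hxy.addOrderOf_right, hxy.apply_eq⟩
  tfae_have 4 → 1 := fun ⟨y, hy, hxy⟩ ↦
    have h : IsHyperbolicPair b d x y := ⟨hx, hy, hxy⟩
    ⟨_, mem_span y, h.nonempty_span_addEquiv hb hd, h.isCompl_orthogonalBilin hb hd⟩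
  tfae_have 4 → 3 := fun ⟨y, hy, hxy⟩ ↦
    ⟨y, IsHyperbolicPair.isCompl_orthogonalBilin ⟨hx, hy, hxy⟩ hb hd⟩
  tfae_finish

end HyperbolicPair

section DiscriminantForm

variable {V : Type} [AddCommGroup V] [Module ℚ V] {B : V →ₗ[ℚ] V →ₗ[ℚ] ℚ} {L : Submodule ℤ V}
  {halt : ∀ v, B v v = 0}

variable (B L halt) in
theorem isAlt_discForm : (discForm B L halt).IsAlt := by
  intro z
  obtain ⟨v, rfl⟩ := Submodule.Quotient.mk_surjective _ z
  change ((B (v : V) (v : V) : ℚ) : AddCircle (1 : ℚ)) = 0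
  rw [halt, AddCircle.coe_zero]

theorem discOrth_eq_orthogonalBilin (S : Submodule ℤ (DiscGroup B L)) :
    discOrth B L halt S = S.orthogonalBilin (discForm B L halt) := by
  ext z
  simp only [discOrth, Submodule.mem_iInf, LinearMap.mem_ker, LinearMap.flip_apply,
    Submodule.mem_orthogonalBilin_iff, (isAlt_discForm B L halt).eq_iff (x := z)]

theorem isCompl_orthogonalBilin_discForm_iff (S : Submodule ℤ (DiscGroup B L)) :
    IsCompl S (S.orthogonalBilin (discForm B L halt)) ↔
      S ⊔ discOrth B L halt S = ⊤ ∧ S ⊓ discOrth B L halt S = ⊥ := by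
  rw [discOrth_eq_orthogonalBilin, isCompl_iff, disjoint_iff, codisjoint_iff, and_comm]

end DiscriminantForm

/-- **Characterizations of splitting elements** of the discriminant group.
For `x ∈ D_Λ` of order `d` the four conditions of Lemma 3.1 are equivalent. -/
theorem splitting_element_characterizations
    (V : Type) [AddCommGroup V] [Module ℚ V]
    (B : V →ₗ[ℚ] V →ₗ[ℚ] ℚ)
    (halt : ∀ v, B v v = 0)
    (hnd : ∀ v : V, (∀ w, B v w = 0) → v = 0)
    (L : Submodule ℤ V) (hfg : L.FG)
    (hspan : Submodule.span ℚ (L : Set V) = ⊤)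
    (hint : ∀ x ∈ L, ∀ y ∈ L, ∃ n : ℤ, B x y = (n : ℚ))
    (x : DiscGroup B L) (d : ℕ) (hd0 : 0 < d) (hord : addOrderOf x = d) :
    ((∃ D₁ : Submodule ℤ (DiscGroup B L), x ∈ D₁ ∧
        Nonempty (D₁ ≃+ (ZMod d × ZMod d)) ∧
        D₁ ⊔ discOrth B L halt D₁ = ⊤ ∧ D₁ ⊓ discOrth B L halt D₁ = ⊥) ↔
      (∃ D₁ : Submodule ℤ (DiscGroup B L), x ∈ D₁ ∧
        Nonempty (D₁ ≃+ (ZMod d × ZMod d)) ∧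
        ∀ z ∈ D₁, (∀ y ∈ D₁, discForm B L halt z y = 0) → z = 0)) ∧
    ((∃ D₁ : Submodule ℤ (DiscGroup B L), x ∈ D₁ ∧
        Nonempty (D₁ ≃+ (ZMod d × ZMod d)) ∧
        D₁ ⊔ discOrth B L halt D₁ = ⊤ ∧ D₁ ⊓ discOrth B L halt D₁ = ⊥) ↔
      (∃ y : DiscGroup B L,
        Submodule.span ℤ {x, y} ⊔ discOrth B L halt (Submodule.span ℤ {x, y}) = ⊤ ∧
        Submodule.span ℤ {x, y} ⊓ discOrth B L halt (Submodule.span ℤ {x, y}) = ⊥)) ∧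
    ((∃ D₁ : Submodule ℤ (DiscGroup B L), x ∈ D₁ ∧
        Nonempty (D₁ ≃+ (ZMod d × ZMod d)) ∧
        D₁ ⊔ discOrth B L halt D₁ = ⊤ ∧ D₁ ⊓ discOrth B L halt D₁ = ⊥) ↔
      (∃ y : DiscGroup B L, addOrderOf y = d ∧
        discForm B L halt x y = ((((d : ℚ))⁻¹ : ℚ) : AddCircle (1 : ℚ)))) := by
  have h := splitting_element_characterizations_general (isAlt_discForm B L halt) hd0 hord
  simp only [isCompl_orthogonalBilin_discForm_iff,
    nondegenerate_domRestrict₁₂_iff (isAlt_discForm B L halt).isRefl] at h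
  exact ⟨h.out 0 1, h.out 0 2, h.out 0 3⟩
end
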